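/- (Theorem 3) Let γ > 0, β > 0, b > 0, k ≥ 1, and set θ = (γ,β). Define the perturbation mechanism that maps an input z = (z_1,…,z_k) ∈ (0,∞)^k to Z* = (H(G_θ(z_1) + e_1), …, H(G_θ(z_k) + e_k)), where e_1,…,e_k are independent Laplace(0,b) random variables, G_θ is the cdf of GPD(γ,β), H = G_θ^{−1} ∘ R, and R is the cdf of U + e with U ~ Uniform(0,1) independent of e ~ Laplace(0,b). Then for any two inputs z, z′ ∈ (0,∞)^k differing in exactly one coordinate and any Borel set B ⊆ ℝ^k, P(Z*(z) ∈ B) ≤ e^{b} · P(Z*(z′) ∈ B); that is, the mechanism is b-differentially private. -/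

import Mathlib

open MeasureTheory ProbabilityTheory Real Set

noncomputable section

/-- The density of the Laplace distribution with location `0` and scale parameter `b`. -/
def laplacePDF (b x : ℝ) : ℝ := b / 2 * Real.exp (-b * |x|)

/-- The Laplace(0, b) measure on `ℝ`. -/
def laplaceMeasure (b : ℝ) : Measure ℝ :=
  volume.withDensity fun x => ENNReal.ofReal (laplacePDF b x)

/-- The uniform distribution on the interval `(0,1)`. -/
def unifMeasure : Measure ℝ := volume.restrict (Set.Ioo 0 1)

/-- The cdf of the generalized Pareto distribution GPD(γ, β). -/
def gpdCDF (γ β y : ℝ) : ℝ := if y < 0 then 0 else 1 - (1 + γ * y / β) ^ (-(1 / γ))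

/-- The inverse on `(0,1)` of the cdf of GPD(γ, β). -/
def gpdCDFInv (γ β p : ℝ) : ℝ := β / γ * ((1 - p) ^ (-γ) - 1)

/-!
The mechanism is the Laplace mechanism followed by a fixed measurable map. Translating a Laplace
density by `d` changes it by a factor of at most `exp (b * |d|)`, so translating every coordinate
of the noise multiplies its product law by at most `exp (b * L)`, where `L` is the `ℓ¹`-length of
the translation. The cdf `G_θ` takes values in `[0, 1]`, so changing one input moves the
translation by at most `1` in `ℓ¹`, and a measurable map, here `H` in each coordinate, preserves
an inequality between output laws.
-/

section DifferentialPrivacy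

variable {ι κ X α α' Ω : Type*} [MeasurableSpace α] [MeasurableSpace α'] [MeasurableSpace Ω]

/-- The adjacency relation of differential privacy: the inputs `z` and `w` agree away from a
single coordinate. They are allowed to agree at that coordinate as well. -/
def AreNeighbors (z w : ι → X) : Prop := ∃ i, ∀ j, j ≠ i → z j = w j

/-- `ε`-differential privacy of a randomized mechanism, encoded as the family `M` of its output
laws: `M z` is the law of the output on the input `z`. -/
def IsDifferentiallyPrivate (ε : ℝ) (M : (ι → X) → Measure α) : Prop :=
  ∀ ⦃z z'⦄, AreNeighbors z z' → M z ≤ ENNReal.ofReal (exp ε) • M z'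

theorem IsDifferentiallyPrivate.map {ε : ℝ} {M : (ι → X) → Measure α}
    (hM : IsDifferentiallyPrivate ε M) {T : α → α'} (hT : Measurable T) :
    IsDifferentiallyPrivate ε fun z => (M z).map T := fun _ _ hz =>
  (Measure.map_mono (hM hz) hT).trans_eq (Measure.map_smul _ _ _)

theorem map_const_add_withDensity {G : Type*} [AddGroup G] [MeasurableSpace G] [MeasurableAdd G]
    (μ : Measure G) [μ.IsAddLeftInvariant] (f : G → ENNReal) (a : G) :
    (μ.withDensity f).map (a + ·) = μ.withDensity fun x => f (-a + x) := by
  ext s hs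
  have hpre : MeasurableSet ((a + ·) ⁻¹' s) := measurable_const_add a hs
  rw [Measure.map_apply (measurable_const_add a) hs, withDensity_apply _ hpre,
    withDensity_apply _ hs]
  simpa only [neg_add_cancel_left] using
    (measurePreserving_add_left μ a).setLIntegral_comp_preimage_emb
      (measurableEmbedding_addLeft a) (fun x => f (-a + x)) s

theorem pi_le_prod_smul_pi [Fintype ι] {E : ι → Type*} [∀ i, MeasurableSpace (E i)]
    {μ ν : ∀ i, Measure (E i)} {c : ι → ENNReal} (hc : ∀ i, c i ≠ ⊤)
    (h : ∀ i, μ i ≤ c i • ν i) : Measure.pi μ ≤ (∏ i, c i) • Measure.pi ν := by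
  have outer_le : OuterMeasure.pi (fun i => (μ i).toOuterMeasure) ≤
      (∏ i, c i) • OuterMeasure.pi fun i => (ν i).toOuterMeasure := by
    rw [OuterMeasure.pi, OuterMeasure.pi,
      OuterMeasure.smul_boundedBy (ENNReal.prod_ne_top fun i _ => hc i),
      OuterMeasure.le_boundedBy]
    refine fun s => (OuterMeasure.boundedBy_le s).trans ?_
    calc ∏ i, μ i (Function.eval i '' s)
        ≤ ∏ i, c i * ν i (Function.eval i '' s) := Finset.prod_le_prod' fun i _ => h i _
      _ = (∏ i, c i) * ∏ i, ν i (Function.eval i '' s) := Finset.prod_mul_distrib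
  refine Measure.le_iff.2 fun s hs => ?_
  rw [Measure.smul_apply, Measure.pi, Measure.pi, toMeasure_apply _ _ hs, toMeasure_apply _ _ hs]
  exact outer_le s

theorem laplacePDF_le_exp_mul_laplacePDF {b : ℝ} (hb : 0 ≤ b) (x y : ℝ) :
    laplacePDF b x ≤ exp (b * |x - y|) * laplacePDF b y := by
  have abs_le : |y| ≤ |x - y| + |x| := by
    simpa [abs_sub_comm, add_comm] using abs_sub_abs_le_abs_sub y x
  calc b / 2 * exp (-b * |x|)
      ≤ b / 2 * exp (b * |x - y| + -b * |y|) := by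
        gcongr
        linarith [mul_le_mul_of_nonneg_left abs_le hb]
    _ = exp (b * |x - y|) * (b / 2 * exp (-b * |y|)) := by rw [exp_add]; ring

theorem laplaceMeasure_map_const_add_le {b : ℝ} (hb : 0 ≤ b) (a c : ℝ) :
    (laplaceMeasure b).map (a + ·) ≤
      ENNReal.ofReal (exp (b * |a - c|)) • (laplaceMeasure b).map (c + ·) := by
  simp only [laplaceMeasure, map_const_add_withDensity]
  rw [← withDensity_smul' _ _ ENNReal.ofReal_ne_top]
  refine withDensity_mono (.of_forall fun x => ?_)
  rw [Pi.smul_apply, smul_eq_mul, ← ENNReal.ofReal_mul (exp_nonneg _)]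
  refine ENNReal.ofReal_le_ofReal ?_
  have shift : |(-a + x) - (-c + x)| = |a - c| := by rw [abs_sub_comm]; ring_nf
  exact shift ▸ laplacePDF_le_exp_mul_laplacePDF hb (-a + x) (-c + x)

/-- The output law of the Laplace mechanism at the query value `a`: the law of `a + e`, where the
coordinates of `e` are independent with law `laplaceMeasure b`. -/
def laplaceMechanism [Fintype ι] (b : ℝ) (a : ι → ℝ) : Measure (ι → ℝ) :=
  Measure.pi fun j => (laplaceMeasure b).map (a j + ·)

theorem hasLaw_laplaceMechanism [Fintype ι] {P : Measure Ω} {b : ℝ} {e : ι → Ω → ℝ}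
    (he : ∀ j, HasLaw (e j) (laplaceMeasure b) P) (hind : iIndepFun e P) (a : ι → ℝ) :
    HasLaw (fun ω j => a j + e j ω) (laplaceMechanism b a) P :=
  (hind.comp (fun j x => a j + x) fun j => measurable_const_add (a j)).hasLaw_pi fun j =>
    ((measurable_const_add (a j)).measurePreserving _).comp_hasLaw (he j)

theorem laplaceMechanism_le [Fintype ι] {b : ℝ} (hb : 0 ≤ b) (a a' : ι → ℝ) :
    laplaceMechanism b a ≤
      ENNReal.ofReal (exp (b * ∑ j, |a j - a' j|)) • laplaceMechanism b a' := by
  rw [Finset.mul_sum, exp_sum, ENNReal.ofReal_prod_of_nonneg fun _ _ => exp_nonneg _]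
  exact pi_le_prod_smul_pi (fun _ => ENNReal.ofReal_ne_top) fun j =>
    laplaceMeasure_map_const_add_le hb (a j) (a' j)

theorem isDifferentiallyPrivate_laplaceMechanism [Fintype κ] {b Δ : ℝ} (hb : 0 ≤ b)
    {f : (ι → X) → κ → ℝ}
    (hf : ∀ z z', AreNeighbors z z' → ∑ j, |f z j - f z' j| ≤ Δ) :
    IsDifferentiallyPrivate (b * Δ) fun z => laplaceMechanism b (f z) := by
  intro z z' hz
  refine (laplaceMechanism_le hb (f z) (f z')).trans ?_
  gcongr
  exact hf z z' hz

theorem AreNeighbors.sum_abs_sub_le [Fintype ι] {G : X → ℝ} {Δ : ℝ}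
    (hG : ∀ x x', |G x - G x'| ≤ Δ) {z z' : ι → X} (hz : AreNeighbors z z') :
    ∑ j, |G (z j) - G (z' j)| ≤ Δ := by
  obtain ⟨i, hi⟩ := hz
  rw [Fintype.sum_eq_single i fun j hj => by rw [hi j hj, sub_self, abs_zero]]
  exact hG (z i) (z' i)

theorem gpdCDF_mem_Icc {γ β : ℝ} (hγ : 0 < γ) (hβ : 0 < β) (y : ℝ) :
    gpdCDF γ β y ∈ Icc 0 1 := by
  unfold gpdCDF
  split_ifs with hy
  · exact ⟨le_rfl, zero_le_one⟩
  have hy : 0 ≤ y := not_lt.1 hy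
  have one_le_base : 1 ≤ 1 + γ * y / β := le_add_of_nonneg_right (by positivity)
  have exponent_nonpos : -(1 / γ) ≤ 0 := neg_nonpos.2 (by positivity)
  exact ⟨sub_nonneg.2 (rpow_le_one_of_one_le_of_nonpos one_le_base exponent_nonpos),
    sub_le_self _ (rpow_nonneg (zero_le_one.trans one_le_base) _)⟩

theorem measurable_gpdCDFInv (γ β : ℝ) : Measurable (gpdCDFInv γ β) := by
  unfold gpdCDFInv
  fun_prop

theorem measurable_measureReal_le (P : Measure Ω) [IsFiniteMeasure P] (Y : Ω → ℝ) :
    Measurable fun x => P.real {ω | Y ω ≤ x} :=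
  Monotone.measurable fun _ _ hxy => measureReal_mono fun _ hω => le_trans hω hxy

theorem gpd_perturbation_mechanism_differentially_private_general [Finite ι] {P : Measure Ω}
    {b : ℝ} (hb : 0 < b) {e : ι → Ω → ℝ} (he : ∀ j, HasLaw (e j) (laplaceMeasure b) P)
    (hind : iIndepFun e P) {G : X → ℝ} (hG : ∀ x, G x ∈ Icc 0 1)
    {T : (ι → ℝ) → α} (hT : Measurable T) {z z' : ι → X} (hz : AreNeighbors z z')
    {B : Set α} (hB : MeasurableSet B) :
    P {ω | T (fun j => G (z j) + e j ω) ∈ B} ≤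
      ENNReal.ofReal (exp b) * P {ω | T (fun j => G (z' j) + e j ω) ∈ B} := by
  have := Fintype.ofFinite ι
  have sensitivity_le (x x' : X) : |G x - G x'| ≤ 1 := by
    simpa using abs_sub_le_of_le_of_le (hG x).1 (hG x).2 (hG x').1 (hG x').2
  have private_output : IsDifferentiallyPrivate (b * 1) fun z : ι → X =>
      (laplaceMechanism b fun j => G (z j)).map T :=
    (isDifferentiallyPrivate_laplaceMechanism hb.le fun _ _ hz =>
      hz.sum_abs_sub_le sensitivity_le).map hT
  have prob_eq (w : ι → X) : P {ω | T (fun j => G (w j) + e j ω) ∈ B} =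
      (laplaceMechanism b fun j => G (w j)).map T B := by
    rw [Measure.map_apply hT hB]
    exact (hasLaw_laplaceMechanism he hind fun j => G (w j)).measure_eq (hT hB)
  simpa only [prob_eq, mul_one, Measure.smul_apply, smul_eq_mul] using private_output hz B

end DifferentialPrivacy

/-- Theorem 3: with known parameter `θ = (γ, β)`, the perturbation mechanism
`z ↦ (H(G_θ(z_1) + e_1), …, H(G_θ(z_k) + e_k))`, with `H = G_θ^{-1} ∘ R` and `R` the cdf of
an independent Uniform(0,1) plus Laplace(0,b) sum, is `b`-differentially private. -/
theorem gpd_perturbation_mechanism_differentially_private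
    {Ω : Type*} [MeasurableSpace Ω] (P : Measure Ω) [IsProbabilityMeasure P]
    {Ω' : Type*} [MeasurableSpace Ω'] (P' : Measure Ω') [IsProbabilityMeasure P']
    (γ β b : ℝ) (hγ : 0 < γ) (hβ : 0 < β) (hb : 0 < b) (k : ℕ) (hk : 1 ≤ k)
    (e : Fin k → Ω → ℝ) (hem : ∀ j, Measurable (e j))
    (hind : iIndepFun e P)
    (hlaw : ∀ j, Measure.map (e j) P = laplaceMeasure b)
    (U e' : Ω' → ℝ) (hUm : Measurable U) (he'm : Measurable e')
    (hU : Measure.map U P' = unifMeasure)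
    (he' : Measure.map e' P' = laplaceMeasure b)
    (hUe' : IndepFun U e' P')
    (R : ℝ → ℝ) (hR : ∀ x, R x = (P' {ω | U ω + e' ω ≤ x}).toReal)
    (H : ℝ → ℝ) (hH : ∀ x, H x = gpdCDFInv γ β (R x))
    (z z' : Fin k → ℝ) (hz : ∀ j, 0 < z j) (hz' : ∀ j, 0 < z' j)
    (hdiff : ∃ i₀ : Fin k, (∀ j, j ≠ i₀ → z j = z' j))
    (B : Set (Fin k → ℝ)) (hB : MeasurableSet B) :
    P {ω | (fun j => H (gpdCDF γ β (z j) + e j ω)) ∈ B} ≤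
      ENNReal.ofReal (Real.exp b) *
        P {ω | (fun j => H (gpdCDF γ β (z' j) + e j ω)) ∈ B} := by
  have hHm : Measurable H := by
    rw [funext hH, funext hR]
    exact (measurable_gpdCDFInv γ β).comp (measurable_measureReal_le P' fun ω => U ω + e' ω)
  exact gpd_perturbation_mechanism_differentially_private_general hb
    (fun j => ⟨(hem j).aemeasurable, hlaw j⟩) hind (gpdCDF_mem_Icc hγ hβ)
    (T := fun x j => H (x j)) (by fun_prop) hdiff hB

end
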